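/- arXiv:1004.3709 — 2 statements merged into one kernel-verified Lean document; each statement's English description precedes it below -/
import Mathlib

section
/- Let A ⊆ ZMod N be nonempty with A - A = ZMod N. Suppose ψ : ZMod N → ZMod N satisfies ψ(d₁ + d₂) = ψ(d₁) + ψ(d₂) for every additive pair (d₁, d₂). Then there exists a Freiman homomorphism f : A → ZMod N whose induced function φ_f equals ψ. -/
open Pointwise

/-- `f` is a Freiman homomorphism on `A ⊆ ZMod N`. -/
def IsFreimanHomOn {N : ℕ} (A : Set (ZMod N)) (f : ZMod N → ZMod N) : Prop :=
  ∀ a ∈ A, ∀ b ∈ A, ∀ c ∈ A, ∀ d ∈ A, a - b = c - d → f a - f b = f c - f d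

section AddCommGroup

variable {G H : Type*} [AddCommGroup G] [AddCommGroup H] {A : Set G} {f ψ : G → H}

/-- `(d₁, d₂)` is an additive pair for `A`: both differences are realised consecutively inside `A`,
so that `d₁ + d₂` is realised as well. -/
def IsAdditivePair (A : Set G) (d₁ d₂ : G) : Prop :=
  ∃ x, x ∈ A ∧ x + d₁ ∈ A ∧ x + d₁ + d₂ ∈ A

/-- `ψ` is a function `φ_f` induced by `f` on the differences of `A`. This is a relation between
`f` and `ψ` because the values of `ψ` outside `A - A` are unconstrained; for `A - A` the whole
group it determines `ψ`. -/
def IsInducedFunction (A : Set G) (f ψ : G → H) : Prop :=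
  ∀ d x, x ∈ A → x + d ∈ A → f (x + d) - f x = ψ d

theorem IsInducedFunction.sub_eq (h : IsInducedFunction A f ψ) {a b : G} (ha : a ∈ A)
    (hb : b ∈ A) : f a - f b = ψ (a - b) := by
  simpa only [add_sub_cancel] using h (a - b) b hb (by rwa [add_sub_cancel])

theorem IsInducedFunction.isAddFreimanHom (h : IsInducedFunction A f ψ) :
    IsAddFreimanHom 2 A Set.univ f := by
  refine isAddFreimanHom_two.2 ⟨Set.mapsTo_univ f A, fun a ha b hb c hc d hd habcd ↦ ?_⟩
  rw [← sub_eq_sub_iff_add_eq_add] at habcd ⊢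
  rw [h.sub_eq ha hd, h.sub_eq hc hb, habcd]

-- For every `x ∈ A` with `x + d ∈ A`, the base point `a₀` itself witnesses that `(x - a₀, d)` is an
-- additive pair, so `ψ` integrates to `f x = ψ (x - a₀)` in one step.
theorem isInducedFunction_comp_sub_right {a₀ : G} (ha₀ : a₀ ∈ A)
    (hψ : ∀ d₁ d₂, IsAdditivePair A d₁ d₂ → ψ (d₁ + d₂) = ψ d₁ + ψ d₂) :
    IsInducedFunction A (fun x ↦ ψ (x - a₀)) ψ := by
  intro d x hx hxd
  have hpair : IsAdditivePair A (x - a₀) d :=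
    ⟨a₀, ha₀, by rwa [add_sub_cancel], by rwa [add_sub_cancel]⟩
  calc ψ (x + d - a₀) - ψ (x - a₀) = ψ (x - a₀ + d) - ψ (x - a₀) := by rw [add_sub_right_comm]
    _ = ψ d := by rw [hψ _ _ hpair, add_sub_cancel_left]

theorem exists_hom_with_induced_function_general (hne : A.Nonempty)
    (hψ : ∀ d₁ d₂, IsAdditivePair A d₁ d₂ → ψ (d₁ + d₂) = ψ d₁ + ψ d₂) :
    ∃ f : G → H, IsAddFreimanHom 2 A Set.univ f ∧ IsInducedFunction A f ψ := by
  obtain ⟨a₀, ha₀⟩ := hne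
  have hind := isInducedFunction_comp_sub_right ha₀ hψ
  exact ⟨_, hind.isAddFreimanHom, hind⟩

end AddCommGroup

theorem isFreimanHomOn_iff_isAddFreimanHom_two {N : ℕ} {A : Set (ZMod N)}
    {f : ZMod N → ZMod N} : IsFreimanHomOn A f ↔ IsAddFreimanHom 2 A Set.univ f := by
  simp only [IsFreimanHomOn, isAddFreimanHom_two, Set.mapsTo_univ, true_and,
    sub_eq_sub_iff_add_eq_add]
  exact ⟨fun h a ha b hb c hc d hd ↦ h a ha d hd c hc b hb,
    fun h a ha b hb c hc d hd ↦ h a ha d hd c hc b hb⟩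

theorem exists_hom_with_induced_function (N : ℕ) (A : Set (ZMod N))
    (hne : A.Nonempty) (hA : A - A = Set.univ)
    (ψ : ZMod N → ZMod N)
    (hψ : ∀ d₁ d₂ : ZMod N,
      (∃ x : ZMod N, x ∈ A ∧ x + d₁ ∈ A ∧ x + d₁ + d₂ ∈ A) →
      ψ (d₁ + d₂) = ψ d₁ + ψ d₂) :
    ∃ f : ZMod N → ZMod N, IsFreimanHomOn A f ∧
      ∀ d x : ZMod N, x ∈ A → x + d ∈ A → f (x + d) - f x = ψ d := by
  obtain ⟨f, hf, hind⟩ := exists_hom_with_induced_function_general hne hψ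
  exact ⟨f, isFreimanHomOn_iff_isAddFreimanHom_two.2 hf, hind⟩
end

section
/- Let (ψ^i)_{i ≥ 0} be any admissible family of maps over ZMod N. For every i ≥ 0 there is a constant C_i > 0, depending only on i, such that for all sufficiently large N, all pairwise distinct a, b, c ∈ ZMod N, and every nonempty B ⊆ ZMod N with |B| ≤ 2d_i + 1, the quantity m(B) (the number of non-degenerate d_i-tuples v such that every element of B occurs among the 2d_i + 1 coordinates of ψ^i(a,b,c,v)) satisfies: m(B) ≤ C_i·N^{d_i − ⌈|B|/2⌉} if |B| < 2d_i + 1, and m(B) ≤ C_i if |B| = 2d_i + 1. -/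
/-- `dd i = (3^(i+1) - 1)/2`, the number of free parameters of `Λ^i`. -/
def dd : ℕ → ℕ
  | 0 => 1
  | (i + 1) => 3 * dd i + 1

theorem dd_succ (i : ℕ) : dd (i + 1) = 3 * dd i + 1 := rfl

/-- Assemble `(a, b, c)` and a `dd i`-tuple `v` into a single input tuple of `ψ^i`;
positions `0, 1, 2` carry `a, b, c` and position `3 + k` carries `v k`. -/
def abcv {N : ℕ} (i : ℕ) (a b c : ZMod N) (v : Fin (dd i) → ZMod N) :
    Fin (3 + dd i) → ZMod N :=
  fun j =>
    if h0 : (j : ℕ) = 0 then a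
    else if h1 : (j : ℕ) = 1 then b
    else if h2 : (j : ℕ) = 2 then c
    else v ⟨(j : ℕ) - 3, by have := j.isLt; omega⟩

/-- Concatenation `v₁ ⊕ v₂ ⊕ v₃ ⊕ z` of three `dd i`-tuples and one extra entry,
giving a `dd (i+1)`-tuple. -/
def vcat {N : ℕ} (i : ℕ) (v₁ v₂ v₃ : Fin (dd i) → ZMod N) (z : ZMod N) :
    Fin (dd (i + 1)) → ZMod N :=
  fun j =>
    if h1 : (j : ℕ) < dd i then v₁ ⟨(j : ℕ), h1⟩
    else if h2 : (j : ℕ) < 2 * dd i then v₂ ⟨(j : ℕ) - dd i, by omega⟩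
    else if h3 : (j : ℕ) < 3 * dd i then v₃ ⟨(j : ℕ) - 2 * dd i, by omega⟩
    else z

/-- Concatenation `u₁ ⊕ u₂ ⊕ u₃` of three output tuples of `ψ^i`, giving an output
tuple of `ψ^{i+1}`. -/
def ocat {N : ℕ} (i : ℕ) (u₁ u₂ u₃ : Fin (2 * dd i + 1) → ZMod N) :
    Fin (2 * dd (i + 1) + 1) → ZMod N :=
  fun j =>
    if h1 : (j : ℕ) < 2 * dd i + 1 then u₁ ⟨(j : ℕ), h1⟩
    else if h2 : (j : ℕ) < 2 * (2 * dd i + 1) then u₂ ⟨(j : ℕ) - (2 * dd i + 1), by omega⟩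
    else u₃ ⟨(j : ℕ) - 2 * (2 * dd i + 1), by
      have := j.isLt; have hd := dd_succ i; omega⟩

/-- A family `(ψ^i)` is admissible if `ψ⁰(a,b,c,x) = (x+a, x+b, x+c)` and
`ψ^{i+1}(a,b,c, v₁⊕v₂⊕v₃⊕z) = ψ^i(a,b,z,v₁) ⊕ ψ^i(a,z,c,v₂) ⊕ ψ^i(z,b,c,v₃)`. -/
def Admissible (N : ℕ)
    (ψ : ∀ i, (Fin (3 + dd i) → ZMod N) → (Fin (2 * dd i + 1) → ZMod N)) : Prop :=
  (∀ (w : Fin (3 + dd 0) → ZMod N) (j : Fin (2 * dd 0 + 1)),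
      ψ 0 w j = w ⟨3, by have h : dd 0 = 1 := rfl; omega⟩ +
        w ⟨(j : ℕ), by have := j.isLt; have h : dd 0 = 1 := rfl; omega⟩) ∧
  (∀ (i : ℕ) (a b c z : ZMod N) (v₁ v₂ v₃ : Fin (dd i) → ZMod N),
      ψ (i + 1) (abcv (i + 1) a b c (vcat i v₁ v₂ v₃ z)) =
        ocat i (ψ i (abcv i a b z v₁)) (ψ i (abcv i a z c v₂)) (ψ i (abcv i z b c v₃)))

open Filter

/-- The `dd i + 3` quantities `v₁, …, v_{dd i}, a, b, c`: position `k < dd i` carries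
`v k`, and positions `dd i, dd i + 1, dd i + 2` carry `a, b, c`. -/
def valGen {N : ℕ} (i : ℕ) (a b c : ZMod N) (v : Fin (dd i) → ZMod N) :
    Fin (dd i + 3) → ZMod N :=
  fun k =>
    if h : (k : ℕ) < dd i then v ⟨(k : ℕ), h⟩
    else if (k : ℕ) = dd i then a
    else if (k : ℕ) = dd i + 1 then b
    else c

/-- A `dd i`-tuple `v` is degenerate if it satisfies a nontrivial relation
`ε₁y₁ + ε₂y₂ + ε₃y₃ + ε₄y₄ = 0` with `εⱼ ∈ {-1,0,1}`, `yⱼ ∈ {v₁,…,v_{dd i},a,b,c}`,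
where the relation does not vanish identically as a formal linear combination and at
least one `yⱼ` with `εⱼ ≠ 0` lies in `{v₁,…,v_{dd i}}`. -/
def DegenerateGen {N : ℕ} (i : ℕ) (a b c : ZMod N) (v : Fin (dd i) → ZMod N) : Prop :=
  ∃ (ε : Fin 4 → ℤ) (y : Fin 4 → Fin (dd i + 3)),
    (∀ j, ε j = -1 ∨ ε j = 0 ∨ ε j = 1) ∧
    (∑ j : Fin 4, (ε j : ZMod N) * valGen i a b c v (y j)) = 0 ∧
    (∃ k : Fin (dd i + 3), (∑ j : Fin 4, if y j = k then ε j else 0) ≠ 0) ∧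
    (∃ j : Fin 4, ε j ≠ 0 ∧ (y j : ℕ) < dd i)

/-- `m(B)`: the number of non-degenerate `dd i`-tuples `v` such that every element of
`B` occurs among the `2 * dd i + 1` coordinates of `Ψ (abcv i a b c v)`. -/
noncomputable def mGen {N : ℕ} (i : ℕ)
    (Ψ : (Fin (3 + dd i) → ZMod N) → (Fin (2 * dd i + 1) → ZMod N))
    (a b c : ZMod N) (B : Finset (ZMod N)) : ℕ :=
  Set.ncard {v : Fin (dd i) → ZMod N |
    ¬ DegenerateGen i a b c v ∧
    ∀ x ∈ B, ∃ j : Fin (2 * dd i + 1), Ψ (abcv i a b c v) j = x}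

/-!
Fix which outputs are to take which values: it suffices to show that prescribing `t` of the
`2dᵢ + 1` outputs leaves at most `N ^ (dᵢ - ⌈t/2⌉)` tuples `v` (at most one if `t = 2dᵢ + 1`).
Induct on `i`. Once the last entry `z` of `v` is chosen, the three blocks are independent, so if
`t = t₀ + t₁ + t₂` is split accordingly and no block is fully prescribed, there are at most
`N · ∏ₛ N ^ (dᵢ - ⌈tₛ/2⌉)` tuples, which is good enough. A fully prescribed block
(`tₛ = 2dᵢ + 1`) only contributes `1` instead of the desired `N⁻¹`; but then its outputs determine
the parameters up to a common translation, so that `z` is unique, which saves the missing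
factor `N`.
-/

section Blocks

lemma dd_zero : dd 0 = 1 := rfl

/-- The outputs of `ψ^{i+1}`, indexed by a block `s` and the position inside that block. -/
def outputEquiv (i : ℕ) : Fin 3 × Fin (2 * dd i + 1) ≃ Fin (2 * dd (i + 1) + 1) :=
  finProdFinEquiv.trans (finCongr (by rw [dd_succ]; ring))

lemma outputEquiv_val (i : ℕ) (s : Fin 3) (k : Fin (2 * dd i + 1)) :
    (outputEquiv i (s, k) : ℕ) = k + (2 * dd i + 1) * s := rfl

lemma ocat_outputEquiv {N : ℕ} (i : ℕ) (u : Fin 3 → Fin (2 * dd i + 1) → ZMod N) (s : Fin 3)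
    (k : Fin (2 * dd i + 1)) :
    ocat i (u 0) (u 1) (u 2) (outputEquiv i (s, k)) = u s k := by
  have hk := k.isLt
  fin_cases s <;> simp only [ocat, outputEquiv_val] <;> split_ifs <;> grind

lemma exists_vcat_eq {N : ℕ} (i : ℕ) (v : Fin (dd (i + 1)) → ZMod N) :
    ∃ v₀ v₁ v₂ z, vcat i v₀ v₁ v₂ z = v := by
  have hd := dd_succ i
  refine ⟨fun k ↦ v ⟨k, by lia⟩, fun k ↦ v ⟨dd i + k, by lia⟩, fun k ↦ v ⟨2 * dd i + k, by lia⟩,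
    v ⟨3 * dd i, by lia⟩, funext fun j ↦ ?_⟩
  have hj := j.isLt
  unfold vcat
  split_ifs <;> exact congrArg v (Fin.ext (by lia))

/-- The positions of block `s` whose output belongs to `T`. -/
def outputBlock {i : ℕ} (T : Finset (Fin (2 * dd (i + 1) + 1))) (s : Fin 3) :
    Finset (Fin (2 * dd i + 1)) :=
  {k | outputEquiv i (s, k) ∈ T}

lemma mem_outputBlock {i : ℕ} {T : Finset (Fin (2 * dd (i + 1) + 1))} {s : Fin 3}
    {k : Fin (2 * dd i + 1)} : k ∈ outputBlock T s ↔ outputEquiv i (s, k) ∈ T := by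
  simp [outputBlock]

lemma card_eq_sum_card_outputBlock {i : ℕ} (T : Finset (Fin (2 * dd (i + 1) + 1))) :
    T.card = ∑ s, (outputBlock T s).card := by
  simp only [outputBlock, Finset.card_filter]
  rw [← Fintype.sum_prod_type' fun s k ↦ if outputEquiv i (s, k) ∈ T then 1 else 0,
    (outputEquiv i).sum_comp fun j ↦ if j ∈ T then 1 else 0, ← Finset.card_filter,
    Finset.filter_univ_mem]

end Blocks

section Bounds

variable {N : ℕ} {ψ : ∀ k, (Fin (3 + dd k) → ZMod N) → (Fin (2 * dd k + 1) → ZMod N)} {i : ℕ}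

namespace Admissible

lemma apply_zero (hψ : Admissible N ψ) (a b c : ZMod N) (v : Fin (dd 0) → ZMod N)
    (j : Fin (2 * dd 0 + 1)) : ψ 0 (abcv 0 a b c v) j = v (0 : Fin 1) + ![a, b, c] j := by
  refine (hψ.1 _ _).trans ?_
  fin_cases j <;> rfl

lemma apply_succ (hψ : Admissible N ψ) (a b c z : ZMod N) (v₀ v₁ v₂ : Fin (dd i) → ZMod N)
    (s : Fin 3) (k : Fin (2 * dd i + 1)) :
    ψ (i + 1) (abcv (i + 1) a b c (vcat i v₀ v₁ v₂ z)) (outputEquiv i (s, k)) =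
      ![ψ i (abcv i a b z v₀), ψ i (abcv i a z c v₁), ψ i (abcv i z b c v₂)] s k := by
  rw [hψ.2]
  exact ocat_outputEquiv i ![_, _, _] s k

lemma sub_eq_sub_of_apply_eq (hψ : Admissible N ψ) {a b c a' b' c' : ZMod N}
    {v v' : Fin (dd i) → ZMod N} (h : ψ i (abcv i a b c v) = ψ i (abcv i a' b' c' v')) :
    a - a' = b - b' ∧ a - a' = c - c' := by
  induction i generalizing a b c a' b' c' with
  | zero =>
    have h_zero (j : Fin (2 * dd 0 + 1)) :
        v (0 : Fin 1) + ![a, b, c] j = v' (0 : Fin 1) + ![a', b', c'] j := by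
      rw [← hψ.apply_zero, ← hψ.apply_zero, h]
    have ha : v (0 : Fin 1) + a = v' (0 : Fin 1) + a' := h_zero 0
    have hb : v (0 : Fin 1) + b = v' (0 : Fin 1) + b' := h_zero 1
    have hc : v (0 : Fin 1) + c = v' (0 : Fin 1) + c' := h_zero 2
    exact ⟨by linear_combination ha - hb, by linear_combination ha - hc⟩
  | succ i ih =>
    obtain ⟨v₀, v₁, v₂, z, rfl⟩ := exists_vcat_eq i v
    obtain ⟨v₀', v₁', v₂', z', rfl⟩ := exists_vcat_eq i v'
    have h_block (s : Fin 3) :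
        ![ψ i (abcv i a b z v₀), ψ i (abcv i a z c v₁), ψ i (abcv i z b c v₂)] s =
          ![ψ i (abcv i a' b' z' v₀'), ψ i (abcv i a' z' c' v₁'), ψ i (abcv i z' b' c' v₂')] s :=
      funext fun k ↦ by rw [← hψ.apply_succ, ← hψ.apply_succ, h]
    exact ⟨(ih (h_block 0)).1, (ih (h_block 1)).2⟩

end Admissible

section Counting

variable [NeZero N]

/-- The tuples `v` for which the outputs `ψ^i(a,b,c,v)` agree with `u` at the positions in `T`. -/
def solutions (ψ : ∀ k, (Fin (3 + dd k) → ZMod N) → (Fin (2 * dd k + 1) → ZMod N)) (i : ℕ)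
    (a b c : ZMod N) (T : Finset (Fin (2 * dd i + 1))) (u : Fin (2 * dd i + 1) → ZMod N) :
    Finset (Fin (dd i) → ZMod N) :=
  {v | ∀ j ∈ T, ψ i (abcv i a b c v) j = u j}

lemma mem_solutions {a b c : ZMod N} {T : Finset (Fin (2 * dd i + 1))}
    {u : Fin (2 * dd i + 1) → ZMod N} {v : Fin (dd i) → ZMod N} :
    v ∈ solutions ψ i a b c T u ↔ ∀ j ∈ T, ψ i (abcv i a b c v) j = u j := by
  simp [solutions]

lemma Admissible.sub_eq_sub_of_mem_solutions_univ (hψ : Admissible N ψ) {a b c a' b' c' : ZMod N}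
    {u : Fin (2 * dd i + 1) → ZMod N} {v v' : Fin (dd i) → ZMod N}
    (hv : v ∈ solutions ψ i a b c Finset.univ u)
    (hv' : v' ∈ solutions ψ i a' b' c' Finset.univ u) : a - a' = b - b' ∧ a - a' = c - c' :=
  hψ.sub_eq_sub_of_apply_eq <| funext fun j ↦
    (mem_solutions.1 hv j (Finset.mem_univ j)).trans
      (mem_solutions.1 hv' j (Finset.mem_univ j)).symm

/-- For a choice `z` of the last entry, the solutions in each of the three blocks of `ψ^{i+1}`. -/
def blockSolutions (ψ : ∀ k, (Fin (3 + dd k) → ZMod N) → (Fin (2 * dd k + 1) → ZMod N)) (i : ℕ)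
    (a b c : ZMod N) (T : Finset (Fin (2 * dd (i + 1) + 1)))
    (u : Fin (2 * dd (i + 1) + 1) → ZMod N) (z : ZMod N) :
    Finset ((Fin (dd i) → ZMod N) × (Fin (dd i) → ZMod N) × (Fin (dd i) → ZMod N)) :=
  solutions ψ i a b z (outputBlock T 0) (fun k ↦ u (outputEquiv i (0, k))) ×ˢ
    solutions ψ i a z c (outputBlock T 1) (fun k ↦ u (outputEquiv i (1, k))) ×ˢ
    solutions ψ i z b c (outputBlock T 2) (fun k ↦ u (outputEquiv i (2, k)))

/-- The last entries `z` that extend to a solution for `ψ^{i+1}`. -/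
def lastEntries (ψ : ∀ k, (Fin (3 + dd k) → ZMod N) → (Fin (2 * dd k + 1) → ZMod N)) (i : ℕ)
    (a b c : ZMod N) (T : Finset (Fin (2 * dd (i + 1) + 1)))
    (u : Fin (2 * dd (i + 1) + 1) → ZMod N) : Finset (ZMod N) :=
  {z | (blockSolutions ψ i a b c T u z).Nonempty}

lemma mem_blockSolutions_of_vcat_mem (hψ : Admissible N ψ) {a b c z : ZMod N}
    {T : Finset (Fin (2 * dd (i + 1) + 1))} {u : Fin (2 * dd (i + 1) + 1) → ZMod N}
    {v₀ v₁ v₂ : Fin (dd i) → ZMod N}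
    (h : vcat i v₀ v₁ v₂ z ∈ solutions ψ (i + 1) a b c T u) :
    (v₀, v₁, v₂) ∈ blockSolutions ψ i a b c T u z := by
  have h_block (s : Fin 3) (k) (hk : k ∈ outputBlock T s) :
      ![ψ i (abcv i a b z v₀), ψ i (abcv i a z c v₁), ψ i (abcv i z b c v₂)] s k =
        u (outputEquiv i (s, k)) := by
    rw [← hψ.apply_succ]
    exact mem_solutions.1 h _ (mem_outputBlock.1 hk)
  exact Finset.mem_product.2 ⟨mem_solutions.2 (h_block 0),
    Finset.mem_product.2 ⟨mem_solutions.2 (h_block 1), mem_solutions.2 (h_block 2)⟩⟩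

lemma solutions_succ_subset (hψ : Admissible N ψ) (a b c : ZMod N)
    (T : Finset (Fin (2 * dd (i + 1) + 1))) (u : Fin (2 * dd (i + 1) + 1) → ZMod N) :
    solutions ψ (i + 1) a b c T u ⊆ (lastEntries ψ i a b c T u).biUnion fun z ↦
      (blockSolutions ψ i a b c T u z).image fun v ↦ vcat i v.1 v.2.1 v.2.2 z := by
  intro v hv
  obtain ⟨v₀, v₁, v₂, z, rfl⟩ := exists_vcat_eq i v
  have h_mem := mem_blockSolutions_of_vcat_mem hψ hv
  have h_last : z ∈ lastEntries ψ i a b c T u := Finset.mem_filter_univ z |>.2 ⟨_, h_mem⟩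
  exact Finset.mem_biUnion.2 ⟨z, h_last, Finset.mem_image.2 ⟨(v₀, v₁, v₂), h_mem, rfl⟩⟩

lemma card_lastEntries_le_one (hψ : Admissible N ψ) (a b c : ZMod N)
    {T : Finset (Fin (2 * dd (i + 1) + 1))} (u : Fin (2 * dd (i + 1) + 1) → ZMod N) {s : Fin 3}
    (hs : outputBlock T s = Finset.univ) : (lastEntries ψ i a b c T u).card ≤ 1 := by
  refine Finset.card_le_one.2 fun z hz z' hz' ↦ ?_
  simp only [lastEntries, Finset.mem_filter_univ, blockSolutions, Finset.nonempty_product] at hz hz'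
  obtain ⟨⟨v₀, h₀⟩, ⟨v₁, h₁⟩, ⟨v₂, h₂⟩⟩ := hz
  obtain ⟨⟨v₀', h₀'⟩, ⟨v₁', h₁'⟩, ⟨v₂', h₂'⟩⟩ := hz'
  fin_cases s <;> simp only [Fin.zero_eta, Fin.mk_one, Fin.reduceFinMk] at hs
  · have h_sub := (hψ.sub_eq_sub_of_mem_solutions_univ (hs ▸ h₀) (hs ▸ h₀')).2
    exact sub_eq_zero.1 (h_sub.symm.trans (sub_self a))
  · have h_sub := (hψ.sub_eq_sub_of_mem_solutions_univ (hs ▸ h₁) (hs ▸ h₁')).1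
    exact sub_eq_zero.1 (h_sub.symm.trans (sub_self a))
  · have h_sub := (hψ.sub_eq_sub_of_mem_solutions_univ (hs ▸ h₂) (hs ▸ h₂')).1
    exact sub_eq_zero.1 (h_sub.trans (sub_self b))

lemma card_lastEntries_le (hψ : Admissible N ψ) (a b c : ZMod N)
    (T : Finset (Fin (2 * dd (i + 1) + 1))) (u : Fin (2 * dd (i + 1) + 1) → ZMod N) :
    (lastEntries ψ i a b c T u).card ≤
      N ^ (if ∃ s, (outputBlock T s).card = 2 * dd i + 1 then 0 else 1) := by
  split_ifs with h_full
  · obtain ⟨s, hs⟩ := h_full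
    have h_univ : outputBlock T s = Finset.univ := by
      rwa [← Finset.card_eq_iff_eq_univ, Fintype.card_fin]
    simpa using card_lastEntries_le_one hψ a b c u h_univ
  · simpa using Finset.card_le_univ (lastEntries ψ i a b c T u)

lemma card_solutions_zero_le (hψ : Admissible N ψ) (a b c : ZMod N)
    (T : Finset (Fin (2 * dd 0 + 1))) (u : Fin (2 * dd 0 + 1) → ZMod N) :
    (solutions ψ 0 a b c T u).card ≤ N ^ (dd 0 - (T.card + 1) / 2) := by
  obtain rfl | ⟨j, hj⟩ := T.eq_empty_or_nonempty
  · simpa using Finset.card_le_univ (solutions ψ 0 a b c ∅ u)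
  · have h_exp : dd 0 - (T.card + 1) / 2 = 0 := by
      have := Finset.card_pos.2 ⟨j, hj⟩
      have := dd_zero
      lia
    rw [h_exp, pow_zero, Finset.card_le_one]
    refine fun v hv v' hv' ↦ funext fun k ↦ ?_
    obtain rfl : k = (0 : Fin 1) := Subsingleton.elim (α := Fin 1) k 0
    have h := (mem_solutions.1 hv j hj).trans (mem_solutions.1 hv' j hj).symm
    rwa [hψ.apply_zero, hψ.apply_zero, add_left_inj] at h

lemma sum_exponent_le {d : ℕ} {t : Fin 3 → ℕ} (ht : ∀ s, t s ≤ 2 * d + 1) :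
    (if ∃ s, t s = 2 * d + 1 then 0 else 1) + ∑ s, (d - (t s + 1) / 2) ≤
      3 * d + 1 - (∑ s, t s + 1) / 2 := by
  have h₀ := ht 0
  have h₁ := ht 1
  have h₂ := ht 2
  simp only [Fin.exists_fin_succ, Fin.succ_zero_eq_one, Fin.succ_one_eq_two, IsEmpty.exists_iff,
    or_false, Fin.sum_univ_three]
  split_ifs <;> lia

lemma card_solutions_succ_le (hψ : Admissible N ψ) {a b c : ZMod N}
    {T : Finset (Fin (2 * dd (i + 1) + 1))} {u : Fin (2 * dd (i + 1) + 1) → ZMod N} {n : ℕ}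
    (h : ∀ z, (blockSolutions ψ i a b c T u z).card ≤ n) :
    (solutions ψ (i + 1) a b c T u).card ≤ (lastEntries ψ i a b c T u).card * n :=
  (Finset.card_le_card (solutions_succ_subset hψ a b c T u)).trans <|
    Finset.card_biUnion_le_card_mul _ _ _ fun z _ ↦ Finset.card_image_le.trans (h z)

-- If all `2dᵢ + 1` outputs are prescribed, truncated subtraction makes the exponent `dᵢ - (dᵢ + 1)`
-- equal to `0`.
lemma card_solutions_le (hψ : Admissible N ψ) (a b c : ZMod N) (T : Finset (Fin (2 * dd i + 1)))
    (u : Fin (2 * dd i + 1) → ZMod N) :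
    (solutions ψ i a b c T u).card ≤ N ^ (dd i - (T.card + 1) / 2) := by
  induction i generalizing a b c with
  | zero => exact card_solutions_zero_le hψ a b c T u
  | succ i ih =>
    have h_block (z : ZMod N) : (blockSolutions ψ i a b c T u z).card ≤
        N ^ ∑ s, (dd i - ((outputBlock T s).card + 1) / 2) := by
      rw [blockSolutions, Finset.card_product, Finset.card_product, Fin.sum_univ_three, pow_add,
        pow_add, mul_assoc]
      gcongr <;> exact ih ..
    have h_exp := sum_exponent_le fun s ↦ card_finset_fin_le (outputBlock T s)
    rw [← card_eq_sum_card_outputBlock, ← dd_succ] at h_exp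
    calc
      _ ≤ (lastEntries ψ i a b c T u).card *
          N ^ ∑ s, (dd i - ((outputBlock T s).card + 1) / 2) := card_solutions_succ_le hψ h_block
      _ ≤ N ^ (if ∃ s, (outputBlock T s).card = 2 * dd i + 1 then 0 else 1) *
          N ^ ∑ s, (dd i - ((outputBlock T s).card + 1) / 2) :=
        Nat.mul_le_mul_right _ (card_lastEntries_le hψ a b c T u)
      _ = N ^ ((if ∃ s, (outputBlock T s).card = 2 * dd i + 1 then 0 else 1) +
          ∑ s, (dd i - ((outputBlock T s).card + 1) / 2)) := (pow_add ..).symm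
      _ ≤ N ^ (dd (i + 1) - (T.card + 1) / 2) := Nat.pow_le_pow_right (NeZero.pos N) h_exp

lemma descFactorial_le_factorial (n k : ℕ) : n.descFactorial k ≤ n.factorial := by
  obtain hk | hk := le_or_gt k n
  · rw [← Nat.factorial_mul_descFactorial hk]
    exact Nat.le_mul_of_pos_left _ (Nat.factorial_pos _)
  · simp [Nat.descFactorial_of_lt hk]

theorem mGen_bound_general (hψ : Admissible N ψ) (a b c : ZMod N) (B : Finset (ZMod N)) :
    {v : Fin (dd i) → ZMod N | ∀ x ∈ B, ∃ j, ψ i (abcv i a b c v) j = x}.ncard ≤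
      (2 * dd i + 1).factorial * N ^ (dd i - (B.card + 1) / 2) := by
  have h_cover : {v : Fin (dd i) → ZMod N | ∀ x ∈ B, ∃ j, ψ i (abcv i a b c v) j = x} ⊆
      ⋃ J : B ↪ Fin (2 * dd i + 1),
        (solutions ψ i a b c (Finset.univ.map J) (Function.extend J (↑) 0) : Set _) := by
    intro v hv
    choose J hJ using hv
    have hJ_inj : Function.Injective fun x : B ↦ J x x.2 := fun x y hxy ↦
      Subtype.ext <| (hJ x x.2).symm.trans <| (congrArg _ hxy).trans (hJ y y.2)
    refine Set.mem_iUnion.2 ⟨⟨_, hJ_inj⟩, mem_solutions.2 fun j hj ↦ ?_⟩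
    obtain ⟨x, -, rfl⟩ := Finset.mem_map.1 hj
    rw [Function.Embedding.coeFn_mk, hJ, hJ_inj.extend_apply]
  calc
    _ ≤ ∑ J : B ↪ Fin (2 * dd i + 1),
        (solutions ψ i a b c (Finset.univ.map J) (Function.extend J (↑) 0)).card := by
      simpa only [Set.ncard_coe_finset] using
        (Set.ncard_le_ncard h_cover).trans (Set.ncard_iUnion_le_of_fintype _)
    _ ≤ ∑ _J : B ↪ Fin (2 * dd i + 1), N ^ (dd i - (B.card + 1) / 2) :=
      Finset.sum_le_sum fun J _ ↦ by simpa using card_solutions_le hψ a b c (Finset.univ.map J) _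
    _ = (2 * dd i + 1).descFactorial B.card * N ^ (dd i - (B.card + 1) / 2) := by simp
    _ ≤ _ := Nat.mul_le_mul_right _ (descFactorial_le_factorial _ _)

end Counting

end Bounds

theorem mGen_bound (i : ℕ) :
    ∃ C : ℝ, 0 < C ∧ ∀ᶠ N : ℕ in atTop,
      ∀ ψ : ∀ k, (Fin (3 + dd k) → ZMod N) → (Fin (2 * dd k + 1) → ZMod N),
        Admissible N ψ →
        ∀ a b c : ZMod N, a ≠ b → a ≠ c → b ≠ c →
          ∀ B : Finset (ZMod N), B.Nonempty → B.card ≤ 2 * dd i + 1 →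
            (B.card < 2 * dd i + 1 →
              (mGen i (ψ i) a b c B : ℝ) ≤
                C * (N : ℝ) ^ (dd i - (B.card + 1) / 2 : ℕ)) ∧
            (B.card = 2 * dd i + 1 → (mGen i (ψ i) a b c B : ℝ) ≤ C) := by
  refine ⟨(2 * dd i + 1).factorial, by positivity,
    (eventually_ne_atTop 0).mono fun N hN ψ hψ a b c _ _ _ B _ _ ↦ ?_⟩
  have : NeZero N := ⟨hN⟩
  have h_bound : (mGen i (ψ i) a b c B : ℝ) ≤
      (2 * dd i + 1).factorial * (N : ℝ) ^ (dd i - (B.card + 1) / 2) :=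
    mod_cast (Set.ncard_le_ncard fun _ hv ↦ hv.2).trans (mGen_bound_general hψ a b c B)
  have h_exp (hB : B.card = 2 * dd i + 1) : dd i - (B.card + 1) / 2 = 0 := by lia
  exact ⟨fun _ ↦ h_bound, fun hB ↦ by simpa only [h_exp hB, pow_zero, mul_one] using h_bound⟩
end
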